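/- Let K:ℕ→ℕ with K(m)≥1 satisfy lim_{m→∞} (ln³ p_m)/K(m)² = c for some c≥0, and fix σ with 0<σ≤1. Then, as m→∞, the weighted sum of error terms satisfies Σ_{k=0}^{K(m)−1} E_m^{(σ)}(k,K(m))·p_m^{−(σ−δ_k)} = O(1/ln p_m) if c>0, and = o(1/ln p_m) if c=0. -/

import Mathlib

open Filter Asymptotics
open scoped Topology

noncomputable section

/-- The `j`-th prime number, `0`-indexed: `nthPrime 0 = 2`, `nthPrime 1 = 3`, … -/
def nthPrime (j : ℕ) : ℕ := Nat.nth Nat.Prime j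

/-- The partition function `Z_m = ∏_{j=1}^m (1 + 1/p_j)`. -/
def Zm (m : ℕ) : ℝ := ∏ j ∈ Finset.range m, (1 + 1 / (nthPrime j : ℝ))

/-- The element `n = ∏_{j=1}^m p_j^{ν_j}` of `Ω_m` parametrized by `ν ∈ {0,1}^m`. -/
def elt (m : ℕ) (ν : Fin m → Bool) : ℕ := ∏ j : Fin m, if ν j then nthPrime j else 1

/-- The mass `π_m(n) = 1/(Z_m n)`. -/
def mass (m : ℕ) (ν : Fin m → Bool) : ℝ := 1 / (Zm m * (elt m ν : ℝ))

open scoped Classical in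
/-- The error term
`E_m^{(σ)}(k,K) = Π_m{ σk/K < ln n/ln p_m < σ(k+1)/K } - e^{-γ} σ/K`. -/
def Err (m : ℕ) (σ : ℝ) (K : ℕ) (k : ℕ) : ℝ :=
  (∑ ν ∈ Finset.univ.filter (fun ν : Fin m → Bool =>
      σ * k / K < Real.log (elt m ν) / Real.log (nthPrime (m - 1)) ∧
      Real.log (elt m ν) / Real.log (nthPrime (m - 1)) < σ * (k + 1) / K),
    mass m ν) - Real.exp (-Real.eulerMascheroniConstant) * σ / K

/-!
Up to the factor `log p_m`, the weighted sum is a difference of two quantities that both tend to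
`e^{-γ}`. Write `h = σ log p_m / K`, so that the `k`-th bin is `e^{hk} < n < e^{h(k+1)}` and its
weight is `e^{hk} / p_m^σ`.

* Inside a bin the product of the weight and the mass `1 / (Z_m n)` equals `1 / (Z_m p_m^σ)` up to
  a factor in `[e^{-h}, 1]`. As `σ ≤ 1`, the `n` in the bins are all the squarefree numbers up to
  `p_m^σ` except for at most two grid points. Squarefree numbers have density `1 / ζ(2)` and
  Mertens' third theorem gives `log p_m / Z_m → e^{-γ} ζ(2)`, so for `h → 0` the weighted
  probabilities times `log p_m` tend to `e^{-γ}`.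
* The subtracted terms form the geometric sum `e^{-γ} h e^{-hK} ∑_{k<K} e^{hk}`, which tends to
  `e^{-γ}` as well.

The constant in Mertens' third theorem comes from comparing the Euler product of `ζ(1 + s)` as
`s → 0⁺` with the Laplace transform of `u ↦ ∑_{p ≤ e^u} 1/p = log u + l + o(1)`, where
`∫₀^∞ e^{-v} log v dv = -γ`.
-/

section MertensFirst

open ArithmeticFunction Finset

lemma sum_vonMangoldt_mul_div_eq_log_factorial (N : ℕ) :
    ∑ n ∈ Ioc 0 N, vonMangoldt n * ((N / n : ℕ) : ℝ) = Real.log N.factorial := by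
  rw [← sum_Ioc_mul_zeta_eq_sum, vonMangoldt_mul_zeta]
  simp only [log_apply]
  rw [← Real.log_prod fun n hn => Nat.cast_ne_zero.2 (mem_Ioc.1 hn).1.ne', ← Nat.cast_prod,
    ← Icc_add_one_left_eq_Ioc, ← prod_Ico_id_eq_factorial]
  rfl

lemma log_factorial_le_mul_sum_vonMangoldt_div (N : ℕ) :
    Real.log N.factorial ≤ N * ∑ n ∈ Ioc 0 N, vonMangoldt n / (n : ℝ) := by
  rw [← sum_vonMangoldt_mul_div_eq_log_factorial, mul_sum]
  refine sum_le_sum fun n _ => ?_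
  rw [mul_div_left_comm]
  exact mul_le_mul_of_nonneg_left Nat.cast_div_le vonMangoldt_nonneg

lemma mul_sum_vonMangoldt_div_le_log_factorial_add_psi (N : ℕ) :
    N * ∑ n ∈ Ioc 0 N, vonMangoldt n / (n : ℝ) ≤ Real.log N.factorial + Chebyshev.psi N := by
  rw [← sum_vonMangoldt_mul_div_eq_log_factorial, Chebyshev.psi, Nat.floor_natCast, mul_sum,
    ← sum_add_distrib]
  refine sum_le_sum fun n _ => ?_
  have div_le_floor_add_one : (N / n : ℝ) ≤ ((N / n : ℕ) : ℝ) + 1 := by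
    rw [← Nat.floor_div_eq_div (K := ℝ)]
    exact (Nat.lt_floor_add_one _).le
  calc N * (vonMangoldt n / n) = vonMangoldt n * (N / n : ℝ) := mul_div_left_comm ..
    _ ≤ vonMangoldt n * (((N / n : ℕ) : ℝ) + 1) :=
        mul_le_mul_of_nonneg_left div_le_floor_add_one vonMangoldt_nonneg
    _ = vonMangoldt n * ((N / n : ℕ) : ℝ) + vonMangoldt n := mul_add_one ..

lemma abs_sum_vonMangoldt_div_sub_log_le (N : ℕ) :
    |∑ n ∈ Ioc 0 N, vonMangoldt n / (n : ℝ) - Real.log N| ≤ Real.log 4 + 4 := by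
  have log_four_nonneg : 0 ≤ Real.log 4 := Real.log_nonneg (by norm_num)
  rcases N.eq_zero_or_pos with rfl | hN
  · simpa using by linarith
  have hN' : (0 : ℝ) < N := mod_cast hN
  have log_factorial_le : Real.log N.factorial ≤ N * Real.log N := by
    rw [← Real.log_pow]
    exact Real.log_le_log (by positivity) (mod_cast N.factorial_le_pow)
  have le_log_factorial : N * Real.log N - N ≤ Real.log N.factorial := by
    have := Stirling.le_log_factorial_stirling hN.ne'
    have := Real.log_natCast_nonneg N
    have := Real.log_nonneg (show 1 ≤ 2 * Real.pi by linarith [Real.pi_gt_three])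
    linarith
  have lower := log_factorial_le_mul_sum_vonMangoldt_div N
  have upper := mul_sum_vonMangoldt_div_le_log_factorial_add_psi N
  have psi_le := Chebyshev.psi_le_const_mul_self hN'.le
  rw [abs_le]
  constructor <;> refine le_of_mul_le_mul_left ?_ hN' <;> nlinarith

lemma summable_vonMangoldt_div_of_not_prime :
    Summable fun n : ℕ => (if n.Prime then 0 else vonMangoldt n) / (n : ℝ) := by
  have residueClass_mod_one (n : ℕ) :
      vonMangoldt.residueClass (q := 1) 0 n = vonMangoldt n :=
    Set.indicator_of_mem (s := {n : ℕ | (n : ZMod 1) = 0}) (Subsingleton.elim _ _) _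
  simpa only [residueClass_mod_one] using
    vonMangoldt.summable_residueClass_non_primes_div (q := 1) 0

lemma exists_forall_abs_sum_log_div_sub_inv_le : ∃ C : ℝ, ∀ N : ℕ,
    |∑ n ∈ Ioc 0 N, ((if n.Prime then Real.log n / n else 0) - (n : ℝ)⁻¹)| ≤ C := by
  set r : ℕ → ℝ := fun n => (if n.Prime then 0 else vonMangoldt n) / (n : ℝ)
  have r_nonneg (n : ℕ) : 0 ≤ r n := by
    refine div_nonneg ?_ n.cast_nonneg
    split_ifs
    exacts [le_rfl, vonMangoldt_nonneg]
  refine ⟨Real.log 4 + 4 + ∑' n, r n + 1, fun N => ?_⟩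
  have sum_eq : ∑ n ∈ Ioc 0 N, ((if n.Prime then Real.log n / n else 0) - (n : ℝ)⁻¹) =
      ∑ n ∈ Ioc 0 N, vonMangoldt n / (n : ℝ) - ∑ n ∈ Ioc 0 N, r n - harmonic N := by
    rw [harmonic_eq_sum_Icc, ← sum_sub_distrib, Rat.cast_sum, ← Icc_add_one_left_eq_Ioc,
      zero_add, ← sum_sub_distrib]
    refine sum_congr rfl fun n _ => ?_
    by_cases hn : n.Prime <;> simp [r, hn, vonMangoldt_apply_prime]
  have sum_r_le : ∑ n ∈ Ioc 0 N, r n ≤ ∑' n, r n :=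
    summable_vonMangoldt_div_of_not_prime.sum_le_tsum _ fun n _ => r_nonneg n
  have sum_r_nonneg : 0 ≤ ∑ n ∈ Ioc 0 N, r n := sum_nonneg fun n _ => r_nonneg n
  have harmonic_le := harmonic_le_one_add_log N
  have le_harmonic : Real.log N ≤ harmonic N := by
    rcases N.eq_zero_or_pos with rfl | hN
    · simp
    · refine (Real.log_le_log (mod_cast hN) ?_).trans (log_add_one_le_harmonic N)
      exact_mod_cast N.le_succ
  have := abs_le.1 (abs_sum_vonMangoldt_div_sub_log_le N)
  rw [sum_eq, abs_le]
  constructor <;> linarith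

end MertensFirst

section MertensSecond

open Set

variable {F g : ℝ → ℝ} {a : ℝ}

lemma sub_mem_Icc_of_hasDerivAt_of_antitoneOn (hg : AntitoneOn g (Ici a))
    (hF : ∀ x ∈ Ici a, HasDerivAt F (g x) x) {x : ℝ} (hx : a ≤ x) :
    F (x + 1) - F x ∈ Icc (g (x + 1)) (g x) := by
  have hF' (y : ℝ) (hy : x ≤ y) : HasDerivAt F (g y) y := hF y (hx.trans hy)
  obtain ⟨c, ⟨hxc, hcx⟩, hc⟩ := exists_hasDerivAt_eq_slope F g (lt_add_one x)
    (fun y hy => (hF' y hy.1).continuousAt.continuousWithinAt) fun y hy => hF' y hy.1.le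
  rw [add_sub_cancel_left, div_one] at hc
  have hac : a ≤ c := hx.trans hxc.le
  exact hc ▸ ⟨hg hac (hac.trans hcx.le) hcx.le, hg hx hac hxc.le⟩

lemma exists_tendsto_sum_sub_of_hasDerivAt_of_antitoneOn (hg : AntitoneOn g (Ici a))
    (hg_nonneg : ∀ x ∈ Ici a, 0 ≤ g x) (hF : ∀ x ∈ Ici a, HasDerivAt F (g x) x) :
    ∃ l, Tendsto (fun N : ℕ => ∑ n ∈ Finset.range N, g (a + n) - F (a + N)) atTop (𝓝 l) := by
  have le_add (n : ℕ) : a ≤ a + n := le_add_of_nonneg_right n.cast_nonneg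
  have increment (n : ℕ) := sub_mem_Icc_of_hasDerivAt_of_antitoneOn hg hF (le_add n)
  simp only [add_assoc, ← Nat.cast_add_one] at increment
  have mono : Monotone fun N : ℕ => ∑ n ∈ Finset.range N, g (a + n) - F (a + N) := by
    refine monotone_nat_of_le_succ fun N => ?_
    rw [Finset.sum_range_succ]
    linarith [(increment N).2]
  have le_sub (N : ℕ) :
      ∑ n ∈ Finset.range N, g (a + n) - F (a + N) ≤ g a - F a - g (a + N) := by
    induction N with
    | zero => simp
    | succ N ih =>
      rw [Finset.sum_range_succ]
      linarith [(increment N).1]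
  refine ⟨_, tendsto_atTop_ciSup mono ⟨g a - F a, ?_⟩⟩
  rintro _ ⟨N, rfl⟩
  linarith [le_sub N, hg_nonneg _ (le_add N)]

lemma exists_tendsto_sum_inv_mul_log_sub_log_log :
    ∃ l, Tendsto (fun N : ℕ => ∑ n ∈ Finset.range N, ((2 + n : ℝ) * Real.log (2 + n))⁻¹ -
      Real.log (Real.log (2 + N))) atTop (𝓝 l) := by
  have log_pos {x : ℝ} (hx : x ∈ Ici 2) : 0 < Real.log x :=
    Real.log_pos (one_lt_two.trans_le hx)
  refine exists_tendsto_sum_sub_of_hasDerivAt_of_antitoneOn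
    (F := fun x => Real.log (Real.log x)) (g := fun x => (x * Real.log x)⁻¹) ?_ ?_ ?_
  · intro x hx y _ hxy
    have := log_pos hx
    have : (0 : ℝ) < x := two_pos.trans_le hx
    exact inv_anti₀ (by positivity) (by gcongr; linarith)
  · intro x hx
    have := log_pos hx
    have : (0 : ℝ) < x := two_pos.trans_le hx
    positivity
  · intro x hx
    have h := (Real.hasDerivAt_log (two_pos.trans_le hx).ne').log (log_pos hx).ne'
    rwa [div_eq_mul_inv, ← mul_inv] at h

lemma sum_primesLE_add_one_eq_sum_range {M : Type*} [AddCommMonoid M] (f : ℕ → M) (N : ℕ) :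
    ∑ p ∈ Nat.primesLE (N + 1), f p =
      ∑ n ∈ Finset.range N, if (2 + n).Prime then f (2 + n) else 0 := by
  induction N with
  | zero => simp
  | succ N ih =>
    rw [Nat.primesLE_succ, Finset.sum_range_succ, ← ih, show N + 1 + 1 = 2 + N by ring]
    split_ifs
    · rw [Finset.sum_insert (by rw [Nat.mem_primesLE]; lia), add_comm]
    · rw [add_zero]

lemma exists_forall_norm_sum_range_log_div_sub_inv_le : ∃ C : ℝ, ∀ N : ℕ,
    ‖∑ n ∈ Finset.range N, ((if (2 + n).Prime then Real.log (2 + n) / (2 + n) else 0) -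
      (2 + n : ℝ)⁻¹)‖ ≤ C := by
  obtain ⟨C, hC⟩ := exists_forall_abs_sum_log_div_sub_inv_le
  refine ⟨C + 1, fun N => ?_⟩
  have shift : ∑ n ∈ Finset.range N, ((if (2 + n).Prime then Real.log (2 + n) / (2 + n) else 0) -
      (2 + n : ℝ)⁻¹) = ∑ n ∈ Finset.Ioc 0 (1 + N),
        ((if n.Prime then Real.log n / n else 0) - (n : ℝ)⁻¹) + 1 := by
    induction N with
    | zero => simp [Nat.not_prime_one]
    | succ N ih =>
      rw [Finset.sum_range_succ, ih, ← add_assoc, Finset.sum_Ioc_succ_top (by lia),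
        show 1 + N + 1 = 2 + N by ring]
      push_cast
      ring
  rw [shift]
  exact (norm_add_le _ _).trans (add_le_add (hC _) norm_one.le)

lemma exists_tendsto_sum_primesLE_inv_sub_log_log_add_one :
    ∃ l, Tendsto (fun N : ℕ => ∑ p ∈ Nat.primesLE N, (p : ℝ)⁻¹ - Real.log (Real.log (N + 1)))
      atTop (𝓝 l) := by
  obtain ⟨C, hC⟩ := exists_forall_norm_sum_range_log_div_sub_inv_le
  obtain ⟨l, hl⟩ := exists_tendsto_sum_inv_mul_log_sub_log_log
  have log_pos (n : ℕ) : 0 < Real.log (2 + n) := Real.log_pos (by linarith [n.cast_nonneg (α := ℝ)])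
  have antitone_inv_log : Antitone fun n : ℕ => (Real.log (2 + n))⁻¹ := fun a b hab =>
    inv_anti₀ (log_pos a) (Real.log_le_log (by positivity) (by gcongr))
  have tendsto_inv_log : Tendsto (fun n : ℕ => (Real.log (2 + n))⁻¹) atTop (𝓝 0) :=
    (Real.tendsto_log_atTop.comp
      (tendsto_atTop_add_const_left _ 2 tendsto_natCast_atTop_atTop)).inv_tendsto_atTop
  obtain ⟨l', hl'⟩ := cauchySeq_tendsto_of_complete
    (antitone_inv_log.cauchySeq_series_mul_of_tendsto_zero_of_bounded tendsto_inv_log hC)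
  refine ⟨l' + l, (tendsto_add_atTop_iff_nat 1).1 ((hl'.add hl).congr fun N => ?_)⟩
  rw [← add_sub_assoc, ← Finset.sum_add_distrib, sum_primesLE_add_one_eq_sum_range]
  push_cast
  rw [show (N + 1 + 1 : ℝ) = 2 + N by ring]
  congr 1
  refine Finset.sum_congr rfl fun n _ => ?_
  have := (log_pos n).ne'
  rw [smul_eq_mul]
  split_ifs <;> field_simp <;> ring

lemma tendsto_log_sub_log_of_isEquivalent {α : Type*} {l : Filter α} {f g : α → ℝ}
    (hfg : f ~[l] g) (hg : Tendsto g l atTop) :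
    Tendsto (fun x => Real.log (f x) - Real.log (g x)) l (𝓝 0) := by
  have hg_pos := hg.eventually_gt_atTop 0
  have hf_pos := (hfg.symm.tendsto_atTop hg).eventually_gt_atTop 0
  have h := ((isEquivalent_iff_tendsto_one (hg_pos.mono fun x hx => hx.ne')).1 hfg).log one_ne_zero
  rw [Real.log_one] at h
  refine h.congr' ?_
  filter_upwards [hf_pos, hg_pos] with x hfx hgx using Real.log_div hfx.ne' hgx.ne'

lemma tendsto_log_log_floor_add_one_sub_log_log :
    Tendsto (fun x : ℝ => Real.log (Real.log (⌊x⌋₊ + 1)) - Real.log (Real.log x)) atTop (𝓝 0) := by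
  have floor_add_one : (fun x : ℝ => (⌊x⌋₊ + 1 : ℝ)) ~[atTop] fun x => x :=
    isEquivalent_nat_floor.add_isLittleO (isLittleO_const_id_atTop 1)
  exact tendsto_log_sub_log_of_isEquivalent (floor_add_one.log tendsto_id) Real.tendsto_log_atTop

theorem exists_tendsto_sum_primesLE_inv_sub_log_log :
    ∃ l, Tendsto (fun x : ℝ => ∑ p ∈ Nat.primesLE ⌊x⌋₊, (p : ℝ)⁻¹ - Real.log (Real.log x))
      atTop (𝓝 l) := by
  obtain ⟨l, hl⟩ := exists_tendsto_sum_primesLE_inv_sub_log_log_add_one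
  refine ⟨l, ?_⟩
  simpa using (hl.comp tendsto_nat_floor_atTop).add tendsto_log_log_floor_add_one_sub_log_log

end MertensSecond

section Abelian

open MeasureTheory Set

lemma integral_exp_neg_mul_log :
    ∫ v in Ioi (0 : ℝ), Real.exp (-v) * Real.log v = -Real.eulerMascheroniConstant := by
  have eventually_eq : Complex.GammaIntegral =ᶠ[𝓝 1] Complex.Gamma := by
    filter_upwards [(Complex.continuous_re.isOpen_preimage _ isOpen_Ioi).mem_nhds
      (show (1 : ℂ) ∈ Complex.re ⁻¹' Ioi 0 by simp)] with s hs
    exact (Complex.Gamma_eq_integral hs).symm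
  have h := (Complex.hasDerivAt_GammaIntegral (s := 1) (by simp)).unique
    (Complex.hasDerivAt_Gamma_one.congr_of_eventuallyEq eventually_eq)
  simp only [sub_self, Complex.cpow_zero, one_mul, mul_comm (Complex.ofReal (Real.log _))] at h
  exact_mod_cast h

lemma integrableOn_exp_neg_mul_log :
    IntegrableOn (fun v => Real.exp (-v) * Real.log v) (Ioi 0) := by
  refine Integrable.of_integral_ne_zero ?_
  rw [integral_exp_neg_mul_log, neg_ne_zero]
  exact (one_half_pos.trans Real.one_half_lt_eulerMascheroniConstant).ne'

variable {B : ℝ → ℝ} {l : ℝ}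

lemma exists_forall_abs_sub_log_le_of_monotone (hB : Monotone B)
    (hl : Tendsto (fun u => B u - Real.log u) atTop (𝓝 l)) :
    ∃ C, ∀ u > 0, |B u - Real.log u| ≤ C + max (-Real.log u) 0 := by
  obtain ⟨T, hT⟩ := eventually_atTop.1
    ((hl.abs.eventually_lt_const (lt_add_one |l|)).and (eventually_ge_atTop 1))
  have log_T_nonneg : 0 ≤ Real.log T := Real.log_nonneg (hT T le_rfl).2
  refine ⟨|l| + 1 + |B 0| + |B T| + Real.log T, fun u hu => ?_⟩
  have := le_max_left (-Real.log u) 0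
  have := le_max_right (-Real.log u) 0
  rcases le_total T u with hTu | huT
  · linarith [(hT u hTu).1, abs_nonneg (B 0), abs_nonneg (B T)]
  · have := hB hu.le
    have := hB huT
    have := Real.log_le_log hu huT
    rw [abs_le]
    constructor <;> linarith [abs_nonneg l, neg_abs_le (B 0), le_abs_self (B T), abs_nonneg (B 0),
      abs_nonneg (B T)]

lemma exists_forall_norm_exp_neg_mul_sub_log_le_of_monotone (hB : Monotone B)
    (hl : Tendsto (fun u => B u - Real.log u) atTop (𝓝 l)) :
    ∃ C, ∀ s ∈ Ioc (0 : ℝ) 1, ∀ v > 0,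
      ‖Real.exp (-v) * (B (v / s) - Real.log (v / s))‖ ≤ Real.exp (-v) * (C + |Real.log v|) := by
  obtain ⟨C, hC⟩ := exists_forall_abs_sub_log_le_of_monotone hB hl
  refine ⟨C, fun s hs v hv => ?_⟩
  have neg_log_div_le : max (-Real.log (v / s)) 0 ≤ |Real.log v| := by
    refine max_le ?_ (abs_nonneg _)
    rw [Real.log_div hv.ne' hs.1.ne']
    linarith [neg_le_abs (Real.log v), Real.log_nonpos hs.1.le hs.2]
  rw [norm_mul, Real.norm_of_nonneg (Real.exp_nonneg _), Real.norm_eq_abs]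
  gcongr
  exact (hC _ (div_pos hv hs.1)).trans (add_le_add_right neg_log_div_le C)

lemma integrableOn_exp_neg_mul_const_add_abs_log (C : ℝ) :
    IntegrableOn (fun v => Real.exp (-v) * (C + |Real.log v|)) (Ioi 0) := by
  refine (((integrableOn_exp_neg_Ioi 0).mul_const C).add integrableOn_exp_neg_mul_log.abs).congr
    (.of_forall fun v => ?_)
  simp [abs_mul, mul_add]

lemma aestronglyMeasurable_exp_neg_mul_sub_log_of_monotone (hB : Monotone B) (s : ℝ)
    (μ : Measure ℝ) :
    AEStronglyMeasurable (fun v => Real.exp (-v) * (B (v / s) - Real.log (v / s))) μ := by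
  have := hB.measurable
  exact (by fun_prop : Measurable _).aestronglyMeasurable

lemma tendsto_integral_exp_neg_mul_sub_log_of_monotone (hB : Monotone B)
    (hl : Tendsto (fun u => B u - Real.log u) atTop (𝓝 l)) :
    Tendsto (fun s => ∫ v in Ioi (0 : ℝ), Real.exp (-v) * (B (v / s) - Real.log (v / s)))
      (𝓝[>] 0) (𝓝 l) := by
  obtain ⟨C, hC⟩ := exists_forall_norm_exp_neg_mul_sub_log_le_of_monotone hB hl
  have integral_exp_neg_mul_const : ∫ v in Ioi (0 : ℝ), Real.exp (-v) * l = l := by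
    rw [integral_mul_const, integral_exp_neg_Ioi_zero, one_mul]
  rw [← integral_exp_neg_mul_const]
  refine tendsto_integral_filter_of_dominated_convergence _
    (.of_forall fun s => aestronglyMeasurable_exp_neg_mul_sub_log_of_monotone hB s _) ?_
    (integrableOn_exp_neg_mul_const_add_abs_log C) ?_
  · filter_upwards [Ioc_mem_nhdsGT one_pos] with s hs
    exact (ae_restrict_mem measurableSet_Ioi).mono fun v hv => hC s hs v hv
  · refine (ae_restrict_mem measurableSet_Ioi).mono fun v (hv : 0 < v) => ?_
    have tendsto_div : Tendsto (fun s => v / s) (𝓝[>] 0) atTop := by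
      simpa only [div_eq_mul_inv] using tendsto_inv_nhdsGT_zero.const_mul_atTop hv
    exact (hl.comp tendsto_div).const_mul _

theorem tendsto_integral_exp_neg_mul_add_log_of_monotone (hB : Monotone B)
    (hl : Tendsto (fun u => B u - Real.log u) atTop (𝓝 l)) :
    Tendsto (fun s => (∫ v in Ioi (0 : ℝ), Real.exp (-v) * B (v / s)) + Real.log s)
      (𝓝[>] 0) (𝓝 (l - Real.eulerMascheroniConstant)) := by
  obtain ⟨C, hC⟩ := exists_forall_norm_exp_neg_mul_sub_log_le_of_monotone hB hl
  rw [sub_eq_add_neg, ← integral_exp_neg_mul_log]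
  refine ((tendsto_integral_exp_neg_mul_sub_log_of_monotone hB hl).add_const _).congr' ?_
  filter_upwards [Ioc_mem_nhdsGT one_pos] with s hs
  have integrable_sub_log : IntegrableOn
      (fun v => Real.exp (-v) * (B (v / s) - Real.log (v / s))) (Ioi 0) :=
    (integrableOn_exp_neg_mul_const_add_abs_log C).mono'
      (aestronglyMeasurable_exp_neg_mul_sub_log_of_monotone hB s _)
      ((ae_restrict_mem measurableSet_Ioi).mono fun v hv => hC s hs v hv)
  have integrable_const : IntegrableOn (fun v => Real.exp (-v) * Real.log s) (Ioi 0) :=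
    (integrableOn_exp_neg_Ioi 0).mul_const _
  have split : ∀ v ∈ Ioi (0 : ℝ), Real.exp (-v) * B (v / s) =
      Real.exp (-v) * (B (v / s) - Real.log (v / s)) + Real.exp (-v) * Real.log v -
        Real.exp (-v) * Real.log s := by
    intro v hv
    rw [Real.log_div (ne_of_gt hv) hs.1.ne']
    ring
  rw [setIntegral_congr_fun measurableSet_Ioi split, integral_sub
      (integrable_sub_log.fun_add integrableOn_exp_neg_mul_log) integrable_const,
    integral_add integrable_sub_log integrableOn_exp_neg_mul_log, integral_mul_const,
    integral_exp_neg_Ioi_zero, one_mul, sub_add_cancel]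

lemma integral_indicator_Ici_exp_neg {c : ℝ} (hc : 0 ≤ c) :
    ∫ v in Ioi (0 : ℝ), (Ici c).indicator (fun v => Real.exp (-v)) v = Real.exp (-c) := by
  have ae_eq : (Ici c ∩ Ioi 0 : Set ℝ) =ᵐ[volume] Ioi c := by
    have h := Ioi_ae_eq_Ici (μ := volume) (a := c) |>.symm.inter (ae_eq_refl (Ioi 0))
    rwa [Ioi_inter_Ioi, sup_of_le_left hc] at h
  rw [integral_indicator measurableSet_Ici, Measure.restrict_restrict measurableSet_Ici,
    setIntegral_congr_set ae_eq, integral_exp_neg_Ioi]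

theorem tsum_mul_exp_neg_mul_eq_integral {ι : Type*} [Countable ι] {a lam : ι → ℝ} {s : ℝ}
    (ha : ∀ i, 0 ≤ a i) (hlam : ∀ i, 0 ≤ lam i) (hs : 0 < s)
    (hsum : Summable fun i => a i * Real.exp (-(s * lam i))) :
    ∑' i, a i * Real.exp (-(s * lam i)) =
      ∫ v in Ioi (0 : ℝ), Real.exp (-v) * ∑' i, if lam i ≤ v / s then a i else 0 := by
  set F : ι → ℝ → ℝ := fun i v => a i * (Ici (s * lam i)).indicator (fun v => Real.exp (-v)) v
  have F_nonneg (i : ι) (v : ℝ) : 0 ≤ F i v :=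
    mul_nonneg (ha i) (indicator_nonneg (fun _ _ => Real.exp_nonneg _) v)
  have integral_F (i : ι) : ∫ v in Ioi (0 : ℝ), F i v = a i * Real.exp (-(s * lam i)) := by
    rw [integral_const_mul, integral_indicator_Ici_exp_neg (mul_nonneg hs.le (hlam i))]
  have integrable_F (i : ι) : IntegrableOn (F i) (Ioi 0) :=
    ((integrableOn_exp_neg_Ioi 0).indicator measurableSet_Ici).const_mul _
  have h := hasSum_integral_of_summable_integral_norm integrable_F
    (by simpa only [Real.norm_of_nonneg (F_nonneg _ _), integral_F] using hsum)
  simp only [integral_F] at h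
  rw [h.tsum_eq]
  refine integral_congr_ae (.of_forall fun v => ?_)
  simp only [F, ← tsum_mul_left, indicator, mem_Ici, le_div_iff₀' hs]
  exact tsum_congr fun i => by split_ifs <;> ring

end Abelian

section EulerProduct

lemma hasSum_neg_log_one_sub_of_summable {f : ℕ →*₀ ℝ} (hf : ∀ n, 0 ≤ f n) (hsum : Summable f) :
    HasSum (fun p : Nat.Primes => -Real.log (1 - f p)) (Real.log (∑' n, f n)) := by
  have hnorm : Summable (‖f ·‖) := hsum.norm
  have tsum_pos : 0 < ∑' n, f n :=
    hsum.tsum_pos hf 1 (by rw [map_one]; exact one_pos)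
  have lt_one (p : Nat.Primes) : f p < 1 :=
    lt_of_abs_lt (Summable.norm_lt_one (f := (f : ℕ →* ℝ)) hsum p.2.one_lt)
  have euler := EulerProduct.eulerProduct_completely_multiplicative_hasProd hnorm
  refine (Tendsto.log euler tsum_pos.ne').congr fun s => ?_
  rw [Real.log_prod fun p _ => inv_ne_zero (sub_pos.2 (lt_one p)).ne']
  simp only [Real.log_inv]

lemma hasSum_neg_log_one_sub_rpow {x : ℝ} (hx : 1 < x) :
    HasSum (fun p : Nat.Primes => -Real.log (1 - (p : ℝ) ^ (-x)))
      (Real.log (∑' n : ℕ, (n : ℝ) ^ (-x))) :=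
  hasSum_neg_log_one_sub_of_summable
    (f := { toFun n := (n : ℝ) ^ (-x)
            map_zero' := by simp [Real.zero_rpow (by linarith : -x ≠ 0)]
            map_one' := by simp
            map_mul' m n := by simp [Real.mul_rpow] })
    (fun n => Real.rpow_nonneg n.cast_nonneg _) (Real.summable_nat_rpow.2 (by linarith))

lemma tendsto_log_tsum_rpow_add_log :
    Tendsto (fun s : ℝ => Real.log (∑' n : ℕ, (n : ℝ) ^ (-(1 + s))) + Real.log s)
      (𝓝[>] 0) (𝓝 0) := by
  have shift : Tendsto (fun s : ℝ => 1 + s) (𝓝[>] 0) (𝓝[>] 1) := by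
    refine tendsto_nhdsWithin_iff.2 ⟨?_, ?_⟩
    · exact (Continuous.tendsto' (by fun_prop) _ _ (add_zero 1)).mono_left nhdsWithin_le_nhds
    · filter_upwards [self_mem_nhdsWithin] with s (hs : 0 < s) using lt_add_of_pos_right 1 hs
  have h := ((tendsto_sub_mul_tsum_nat_rpow.comp shift).log one_ne_zero)
  rw [Real.log_one] at h
  refine h.congr' ?_
  filter_upwards [self_mem_nhdsWithin] with s (hs : 0 < s)
  have summable_rpow : Summable fun n : ℕ => (n : ℝ) ^ (-(1 + s)) :=
    Real.summable_nat_rpow.2 (by linarith)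
  have tsum_pos : 0 < ∑' n : ℕ, (n : ℝ) ^ (-(1 + s)) :=
    summable_rpow.tsum_pos (fun n => by positivity) 1 (by simp)
  simp only [Function.comp_apply, add_sub_cancel_left, one_div, ← Real.rpow_neg (Nat.cast_nonneg _)]
  rw [Real.log_mul hs.ne' tsum_pos.ne', add_comm]

end EulerProduct

section MertensThird

lemma tendsto_sum_primesLE_of_hasSum {M : Type*} [AddCommMonoid M] [TopologicalSpace M]
    {f : ℕ → M} {a : M} (hf : HasSum (fun p : Nat.Primes => f p) a) :
    Tendsto (fun N : ℕ => ∑ p ∈ Nat.primesLE N, f p) atTop (𝓝 a) := by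
  classical
  rw [Nat.Primes.hasSum_iff_hasSum_ite] at hf
  refine (hf.tendsto_sum_nat.comp (tendsto_add_atTop_nat 1)).congr fun N => ?_
  rw [Function.comp_apply, Nat.primesLE_eq_filter_range, Finset.sum_filter]

lemma tsum_primes_ite_log_le_eq_sum_primesLE (u : ℝ) :
    ∑' p : Nat.Primes, (if Real.log p ≤ u then (p : ℝ)⁻¹ else 0) =
      ∑ p ∈ Nat.primesLE ⌊Real.exp u⌋₊, (p : ℝ)⁻¹ := by
  classical
  have log_le_iff {p : ℕ} (hp : p.Prime) : Real.log p ≤ u ↔ p ∈ Nat.primesLE ⌊Real.exp u⌋₊ := by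
    rw [Nat.mem_primesLE, and_iff_left hp, Nat.le_floor_iff (Real.exp_nonneg _),
      Real.log_le_iff_le_exp (mod_cast hp.pos)]
  have finite_sum := hasSum_sum_of_ne_finset_zero (L := .unconditional _)
    (s := Nat.primesLE ⌊Real.exp u⌋₊)
    (f := fun n : ℕ => if n.Prime then if Real.log n ≤ u then (n : ℝ)⁻¹ else 0 else 0)
    fun n hn => by
      split_ifs with hn_prime hn_le
      exacts [absurd ((log_le_iff hn_prime).1 hn_le) hn, rfl, rfl]
  rw [((Nat.Primes.hasSum_iff_hasSum_ite _).2 finite_sum).tsum_eq]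
  refine Finset.sum_congr rfl fun p hp => ?_
  have hp_prime := Nat.prime_of_mem_primesLE hp
  rw [if_pos hp_prime, if_pos ((log_le_iff hp_prime).2 hp)]

lemma tendsto_tsum_primes_rpow_add_log {l : ℝ}
    (hl : Tendsto (fun x : ℝ => ∑ p ∈ Nat.primesLE ⌊x⌋₊, (p : ℝ)⁻¹ - Real.log (Real.log x))
      atTop (𝓝 l)) :
    Tendsto (fun s : ℝ => ∑' p : Nat.Primes, (p : ℝ) ^ (-(1 + s)) + Real.log s)
      (𝓝[>] 0) (𝓝 (l - Real.eulerMascheroniConstant)) := by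
  set B : ℝ → ℝ := fun u => ∑ p ∈ Nat.primesLE ⌊Real.exp u⌋₊, (p : ℝ)⁻¹ with hB
  have monotone_B : Monotone B := fun u v huv =>
    Finset.sum_le_sum_of_subset_of_nonneg
      (Nat.primesLE_mono (Nat.floor_mono (Real.exp_le_exp.2 huv))) fun p _ _ => by positivity
  have tendsto_B : Tendsto (fun u => B u - Real.log u) atTop (𝓝 l) := by
    simpa only [Function.comp_def, Real.log_exp] using hl.comp Real.tendsto_exp_atTop
  refine (tendsto_integral_exp_neg_mul_add_log_of_monotone monotone_B tendsto_B).congr' ?_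
  filter_upwards [self_mem_nhdsWithin] with s (hs : 0 < s)
  have rpow_eq (p : Nat.Primes) :
      (p : ℝ) ^ (-(1 + s)) = (p : ℝ)⁻¹ * Real.exp (-(s * Real.log p)) := by
    have hp : (0 : ℝ) < p := mod_cast p.2.pos
    rw [neg_add, Real.rpow_add hp, Real.rpow_neg_one, Real.rpow_def_of_pos hp (-s)]
    ring_nf
  have summable_rpow : Summable fun p : Nat.Primes => (p : ℝ) ^ (-(1 + s)) :=
    Nat.Primes.summable_rpow.2 (by linarith)
  simp only [rpow_eq] at summable_rpow ⊢
  rw [tsum_mul_exp_neg_mul_eq_integral (fun p : Nat.Primes => by positivity)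
    (fun p => Real.log_natCast_nonneg p) hs summable_rpow]
  simp only [hB, tsum_primes_ite_log_le_eq_sum_primesLE]

lemma abs_neg_log_one_sub_sub_le {u : ℝ} (hu₀ : 0 ≤ u) (hu : u ≤ 1 / 2) :
    |-Real.log (1 - u) - u| ≤ 2 * u ^ 2 := by
  have taylor := Real.abs_log_sub_add_sum_range_le (abs_lt.2 ⟨by linarith, by linarith⟩) 1
  calc |-Real.log (1 - u) - u|
      = |∑ i ∈ Finset.range 1, u ^ (i + 1) / (i + 1) + Real.log (1 - u)| := by
        rw [← abs_neg]
        simp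
    _ ≤ u ^ 2 / (1 - u) := by simpa [abs_of_nonneg hu₀] using taylor
    _ ≤ 2 * u ^ 2 := by
        rw [div_le_iff₀ (by linarith)]
        nlinarith [sq_nonneg u]

lemma primes_inv_le_one_half (p : Nat.Primes) : (p : ℝ)⁻¹ ≤ 1 / 2 := by
  rw [one_div]
  exact inv_anti₀ two_pos (mod_cast p.2.two_le)

lemma summable_primes_two_mul_inv_sq : Summable fun p : Nat.Primes => 2 * ((p : ℝ)⁻¹) ^ 2 := by
  have h := (Nat.Primes.summable_rpow (r := -2)).2 (by norm_num)
  refine (h.mul_left 2).congr fun p => ?_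
  norm_num [Real.rpow_neg]

lemma summable_primes_neg_log_one_sub_inv_sub :
    Summable fun p : Nat.Primes => -Real.log (1 - (p : ℝ)⁻¹) - (p : ℝ)⁻¹ :=
  summable_primes_two_mul_inv_sq.of_norm_bounded fun p =>
    abs_neg_log_one_sub_sub_le (by positivity) (primes_inv_le_one_half p)

lemma tendsto_tsum_primes_neg_log_one_sub_rpow_sub :
    Tendsto (fun s : ℝ => ∑' p : Nat.Primes,
        (-Real.log (1 - (p : ℝ) ^ (-(1 + s))) - (p : ℝ) ^ (-(1 + s))))
      (𝓝[>] 0) (𝓝 (∑' p : Nat.Primes, (-Real.log (1 - (p : ℝ)⁻¹) - (p : ℝ)⁻¹))) := by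
  refine tendsto_tsum_of_dominated_convergence summable_primes_two_mul_inv_sq (fun p => ?_) ?_
  · have hp : (0 : ℝ) < p := mod_cast p.2.pos
    have tendsto_rpow : Tendsto (fun s : ℝ => (p : ℝ) ^ (-(1 + s))) (𝓝[>] 0) (𝓝 (p : ℝ)⁻¹) := by
      rw [← Real.rpow_neg_one]
      refine Tendsto.mono_left (Continuous.tendsto' ?_ _ _ (by simp)) nhdsWithin_le_nhds
      fun_prop (disch := exact hp.ne')
    have : 1 - (p : ℝ)⁻¹ ≠ 0 := by linarith [primes_inv_le_one_half p]
    exact ((tendsto_rpow.const_sub 1).log this).neg.sub tendsto_rpow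
  · filter_upwards [self_mem_nhdsWithin] with s (hs : 0 < s) p
    have rpow_le : (p : ℝ) ^ (-(1 + s)) ≤ (p : ℝ)⁻¹ := by
      rw [← Real.rpow_neg_one]
      exact Real.rpow_le_rpow_of_exponent_le (mod_cast p.2.one_le) (by linarith)
    refine (abs_neg_log_one_sub_sub_le (by positivity)
      (rpow_le.trans (primes_inv_le_one_half p))).trans ?_
    gcongr

lemma eq_eulerMascheroniConstant_sub_of_tendsto {l : ℝ}
    (hl : Tendsto (fun x : ℝ => ∑ p ∈ Nat.primesLE ⌊x⌋₊, (p : ℝ)⁻¹ - Real.log (Real.log x))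
      atTop (𝓝 l)) :
    l = Real.eulerMascheroniConstant -
      ∑' p : Nat.Primes, (-Real.log (1 - (p : ℝ)⁻¹) - (p : ℝ)⁻¹) := by
  have tendsto_log_zeta := (tendsto_tsum_primes_rpow_add_log hl).add
    tendsto_tsum_primes_neg_log_one_sub_rpow_sub
  have congr : ∀ᶠ s : ℝ in 𝓝[>] 0, ∑' p : Nat.Primes, (p : ℝ) ^ (-(1 + s)) + Real.log s +
      ∑' p : Nat.Primes, (-Real.log (1 - (p : ℝ) ^ (-(1 + s))) - (p : ℝ) ^ (-(1 + s))) =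
      Real.log (∑' n : ℕ, (n : ℝ) ^ (-(1 + s))) + Real.log s := by
    filter_upwards [self_mem_nhdsWithin] with s (hs : 0 < s)
    have euler := hasSum_neg_log_one_sub_rpow (x := 1 + s) (by linarith)
    rw [euler.summable.tsum_sub (Nat.Primes.summable_rpow.2 (by linarith)), euler.tsum_eq]
    ring
  linarith [tendsto_nhds_unique (tendsto_log_zeta.congr' congr) tendsto_log_tsum_rpow_add_log]

theorem tendsto_sum_primesLE_neg_log_one_sub_inv_sub_log_log :
    Tendsto (fun x : ℝ => ∑ p ∈ Nat.primesLE ⌊x⌋₊, -Real.log (1 - (p : ℝ)⁻¹) -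
      Real.log (Real.log x)) atTop (𝓝 Real.eulerMascheroniConstant) := by
  obtain ⟨l, hl⟩ := exists_tendsto_sum_primesLE_inv_sub_log_log
  have correction := (tendsto_sum_primesLE_of_hasSum
    (f := fun p : ℕ => -Real.log (1 - (p : ℝ)⁻¹) - (p : ℝ)⁻¹)
    summable_primes_neg_log_one_sub_inv_sub.hasSum).comp (tendsto_nat_floor_atTop (α := ℝ))
  have h := hl.add correction
  rw [eq_eulerMascheroniConstant_sub_of_tendsto hl, sub_add_cancel] at h
  refine h.congr fun x => ?_
  rw [Function.comp_apply, Finset.sum_sub_distrib]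
  ring

theorem tendsto_sum_primesLE_log_one_add_inv_sub_log_log :
    Tendsto (fun x : ℝ => ∑ p ∈ Nat.primesLE ⌊x⌋₊, Real.log (1 + (p : ℝ)⁻¹) -
      Real.log (Real.log x)) atTop
      (𝓝 (Real.eulerMascheroniConstant - Real.log (Real.pi ^ 2 / 6))) := by
  have euler : Tendsto (fun N : ℕ => ∑ p ∈ Nat.primesLE N, -Real.log (1 - (p : ℝ) ^ (-2 : ℝ)))
      atTop (𝓝 (Real.log (Real.pi ^ 2 / 6))) := by
    have h := tendsto_sum_primesLE_of_hasSum (f := fun p : ℕ => -Real.log (1 - (p : ℝ) ^ (-2 : ℝ)))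
      (hasSum_neg_log_one_sub_rpow one_lt_two)
    simpa only [Real.rpow_neg (Nat.cast_nonneg _), Real.rpow_two, ← one_div,
      hasSum_zeta_two.tsum_eq] using h
  refine (tendsto_sum_primesLE_neg_log_one_sub_inv_sub_log_log.sub
    (euler.comp tendsto_nat_floor_atTop)).congr fun x => ?_
  rw [Function.comp_apply, sub_right_comm, ← Finset.sum_sub_distrib]
  congr 1
  refine Finset.sum_congr rfl fun p hp => ?_
  have hp : (1 : ℝ) < p := mod_cast Nat.one_lt_of_mem_primesLE hp
  have one_sub_sq : 1 - (p : ℝ) ^ (-2 : ℝ) = (1 - (p : ℝ)⁻¹) * (1 + (p : ℝ)⁻¹) := by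
    rw [Real.rpow_neg (by positivity), Real.rpow_two]
    ring
  rw [one_sub_sq, Real.log_mul (sub_pos.2 (inv_lt_one_of_one_lt₀ hp)).ne' (by positivity)]
  ring

end MertensThird

section SquarefreeDensity

open ArithmeticFunction

lemma sq_dvd_sq_mul_iff_dvd_of_squarefree {a b d : ℕ} (ha : Squarefree a) :
    d ^ 2 ∣ b ^ 2 * a ↔ d ∣ b := by
  rcases eq_or_ne b 0 with rfl | hb
  · simp
  rcases eq_or_ne d 0 with rfl | hd
  · simp [hb, ha.ne_zero]
  rw [← Nat.factorization_le_iff_dvd (pow_ne_zero 2 hd) (mul_ne_zero (pow_ne_zero 2 hb) ha.ne_zero),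
    ← Nat.factorization_le_iff_dvd hd hb, Finsupp.le_def, Finsupp.le_def]
  refine forall_congr' fun p => ?_
  rw [Nat.factorization_mul (pow_ne_zero 2 hb) ha.ne_zero, Finsupp.add_apply]
  simp only [Nat.factorization_pow, Finsupp.smul_apply, smul_eq_mul]
  have := ha.natFactorization_le_one p
  lia

lemma squarefree_sq_mul_iff {a b : ℕ} (ha : Squarefree a) : Squarefree (b ^ 2 * a) ↔ b = 1 := by
  refine ⟨fun h => Nat.isUnit_iff.1 (h b (sq b ▸ dvd_mul_right _ a)), ?_⟩
  rintro rfl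
  simpa using ha

lemma sum_moebius_filter_sq_dvd {n N : ℕ} (hn : n ∈ Finset.Ioc 0 N) :
    ∑ d ∈ Finset.Ioc 0 N with d ^ 2 ∣ n, moebius d = if Squarefree n then 1 else 0 := by
  obtain ⟨a, b, rfl, ha⟩ := Nat.sq_mul_squarefree n
  obtain ⟨hpos, hle⟩ := Finset.mem_Ioc.1 hn
  have hb : b ≠ 0 := by
    rintro rfl
    simp at hpos
  have filter_eq : {d ∈ Finset.Ioc 0 N | d ^ 2 ∣ b ^ 2 * a} = b.divisors := by
    ext d
    rw [Finset.mem_filter, sq_dvd_sq_mul_iff_dvd_of_squarefree ha, Finset.mem_Ioc,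
      Nat.mem_divisors, and_comm]
    refine and_congr_right fun hd => ⟨fun _ => hb, fun _ => ⟨Nat.pos_of_dvd_of_pos hd (by lia), ?_⟩⟩
    exact (Nat.le_of_dvd hpos ((hd.trans (dvd_pow_self b two_ne_zero)).mul_right a)).trans hle
  rw [filter_eq, ← coe_mul_zeta_apply, moebius_mul_coe_zeta, one_apply]
  simp only [squarefree_sq_mul_iff ha]

/-- The number of squarefree positive integers up to `N`. -/
def squarefreeCount (N : ℕ) : ℕ := ({n ∈ Finset.Ioc 0 N | Squarefree n}).card

lemma squarefreeCount_eq_sum_moebius (N : ℕ) :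
    (squarefreeCount N : ℤ) = ∑ d ∈ Finset.Ioc 0 N, moebius d * (N / d ^ 2 : ℕ) :=
  calc (squarefreeCount N : ℤ)
    _ = ∑ n ∈ Finset.Ioc 0 N, if Squarefree n then 1 else 0 := by simp [squarefreeCount]
    _ = ∑ n ∈ Finset.Ioc 0 N, ∑ d ∈ Finset.Ioc 0 N, if d ^ 2 ∣ n then moebius d else 0 :=
        Finset.sum_congr rfl fun n hn => by
          rw [← sum_moebius_filter_sq_dvd hn, Finset.sum_filter]
    _ = ∑ d ∈ Finset.Ioc 0 N, ∑ n ∈ Finset.Ioc 0 N, if d ^ 2 ∣ n then moebius d else 0 :=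
        Finset.sum_comm
    _ = ∑ d ∈ Finset.Ioc 0 N, moebius d * (N / d ^ 2 : ℕ) :=
        Finset.sum_congr rfl fun d _ => by
          rw [← Finset.sum_filter, Finset.sum_const, Nat.Ioc_filter_dvd_card_eq_div, nsmul_eq_mul,
            mul_comm]

lemma squarefreeCount_eq_tsum_moebius (N : ℕ) :
    (squarefreeCount N : ℝ) = ∑' d : ℕ, (moebius d : ℝ) * (N / d ^ 2 : ℕ) := by
  rw [tsum_eq_sum (s := Finset.Ioc 0 N)]
  · simpa only [Int.cast_sum, Int.cast_mul, Int.cast_natCast] using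
      congrArg (Int.cast : ℤ → ℝ) (squarefreeCount_eq_sum_moebius N)
  · intro d hd
    rcases Nat.eq_zero_or_pos d with rfl | hd_pos
    · simp
    · have hlt : N < d := by simpa [hd_pos] using hd
      rw [Nat.div_eq_of_lt (hlt.trans_le (Nat.le_self_pow two_ne_zero d)), Nat.cast_zero, mul_zero]

lemma tsum_moebius_mul_inv_sq :
    ∑' d : ℕ, (moebius d : ℝ) * ((d : ℝ) ^ 2)⁻¹ = (Real.pi ^ 2 / 6)⁻¹ := by
  have two_gt_one : 1 < (2 : ℂ).re := by norm_num
  have h := LSeries_one_mul_Lseries_moebius two_gt_one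
  have moebius_eq : LSeries (fun n => ((moebius n : ℤ) : ℂ)) 2 =
      ((∑' d : ℕ, (moebius d : ℝ) * ((d : ℝ) ^ 2)⁻¹ : ℝ) : ℂ) := by
    rw [Complex.ofReal_tsum]
    refine tsum_congr fun n => ?_
    rcases eq_or_ne n 0 with rfl | hn
    · simp
    · simp [LSeries.term_of_ne_zero hn, div_eq_mul_inv]
  rw [LSeries_one_eq_riemannZeta two_gt_one, riemannZeta_two, moebius_eq] at h
  exact eq_inv_of_mul_eq_one_right (mod_cast h)

theorem tendsto_squarefreeCount_floor_div :
    Tendsto (fun y : ℝ => (squarefreeCount ⌊y⌋₊ : ℝ) / y) atTop (𝓝 (Real.pi ^ 2 / 6)⁻¹) := by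
  have floor_div (y : ℝ) (d : ℕ) : (⌊y⌋₊ / d ^ 2 : ℕ) = ⌊((d : ℝ) ^ 2)⁻¹ * y⌋₊ := by
    rw [← Nat.floor_div_natCast, Nat.cast_pow, div_eq_inv_mul]
  simp only [squarefreeCount_eq_tsum_moebius, ← tsum_div_const, mul_div_assoc, floor_div]
  rw [← tsum_moebius_mul_inv_sq]
  refine tendsto_tsum_of_dominated_convergence (bound := fun d : ℕ => ((d : ℝ) ^ 2)⁻¹)
    (Real.summable_nat_pow_inv.2 one_lt_two) (fun d => ?_) ?_
  · exact (tendsto_nat_floor_mul_div_atTop (by positivity)).const_mul _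
  · filter_upwards [eventually_gt_atTop 0] with y hy d
    have floor_le : (⌊((d : ℝ) ^ 2)⁻¹ * y⌋₊ : ℝ) / y ≤ ((d : ℝ) ^ 2)⁻¹ :=
      (div_le_iff₀ hy).2 (Nat.floor_le (by positivity))
    have moebius_le : |(moebius d : ℝ)| ≤ 1 := mod_cast abs_moebius_le_one
    rw [norm_mul, Real.norm_eq_abs, Real.norm_of_nonneg (by positivity)]
    exact (mul_le_of_le_one_left (by positivity) moebius_le).trans floor_le

end SquarefreeDensity

section SquarefreeBins

lemma le_of_squarefree_pow_eq_pow {m n j k : ℕ} (hm : Squarefree m) (hn : Squarefree n)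
    (hm_ne : m ≠ 1) (h : m ^ j = n ^ k) : j ≤ k := by
  obtain ⟨p, hp, hpm⟩ := Nat.exists_prime_and_dvd hm_ne
  have factorization_m : m.factorization p = 1 := le_antisymm (hm.natFactorization_le_one p)
    ((hp.dvd_iff_one_le_factorization hm.ne_zero).1 hpm)
  have factorization_eq : j * m.factorization p = k * n.factorization p := by
    simpa only [Nat.factorization_pow, Finsupp.smul_apply, smul_eq_mul] using
      congrArg (fun n => n.factorization p) h
  rw [factorization_m, mul_one] at factorization_eq
  exact factorization_eq.trans_le (mul_le_of_le_one_right' (hn.natFactorization_le_one p))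

lemma eq_of_squarefree_of_log_eq_mul {m n j k : ℕ} {h : ℝ} (hm : Squarefree m)
    (hn : Squarefree n) (hm_ne : m ≠ 1) (hn_ne : n ≠ 1) (hmj : Real.log m = h * j)
    (hnk : Real.log n = h * k) : m = n := by
  have hm_pos : (0 : ℝ) < m := mod_cast Nat.pos_of_ne_zero hm.ne_zero
  have hn_pos : (0 : ℝ) < n := mod_cast Nat.pos_of_ne_zero hn.ne_zero
  have pow_eq : m ^ k = n ^ j := by
    have : (m : ℝ) ^ k = (n : ℝ) ^ j :=
      Real.log_injOn_pos (pow_pos hm_pos k) (pow_pos hn_pos j) <| by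
        rw [Real.log_pow, Real.log_pow, hmj, hnk]
        ring
    exact_mod_cast this
  have hjk : j = k := le_antisymm (le_of_squarefree_pow_eq_pow hn hm hn_ne pow_eq.symm)
    (le_of_squarefree_pow_eq_pow hm hn hm_ne pow_eq)
  exact_mod_cast Real.log_injOn_pos hm_pos hn_pos (by rw [hmj, hnk, hjk])

/-- The squarefree integers strictly between `e^{hk}` and `e^{h(k+1)}`. The open intervals miss the
grid points `e^{hk}`, as the events defining the error terms do. -/
def squarefreeBin (h : ℝ) (k : ℕ) : Finset ℕ :=
  {n ∈ Finset.Ioc 0 ⌊Real.exp (h * (k + 1))⌋₊ |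
    Squarefree n ∧ h * k < Real.log n ∧ Real.log n < h * (k + 1)}

variable {h : ℝ} {k n K : ℕ}

lemma mem_squarefreeBin :
    n ∈ squarefreeBin h k ↔ Squarefree n ∧ h * k < Real.log n ∧ Real.log n < h * (k + 1) := by
  rw [squarefreeBin, Finset.mem_filter, and_iff_right_iff_imp, Finset.mem_Ioc]
  rintro ⟨hn, -, log_lt⟩
  have hn_pos : 0 < n := Nat.pos_of_ne_zero hn.ne_zero
  exact ⟨hn_pos, Nat.le_floor ((Real.log_le_iff_le_exp (mod_cast hn_pos)).1 log_lt.le)⟩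

lemma pos_of_mem_squarefreeBin (hn : n ∈ squarefreeBin h k) : 0 < h := by
  obtain ⟨-, lt_log, log_lt⟩ := mem_squarefreeBin.1 hn
  linarith

lemma pairwiseDisjoint_squarefreeBin (h : ℝ) (s : Set ℕ) :
    s.PairwiseDisjoint (squarefreeBin h) := by
  refine fun j _ k _ hjk => Finset.disjoint_left.2 fun n hj hk => hjk ?_
  have h_nonneg := (pos_of_mem_squarefreeBin hj).le
  obtain ⟨-, lt_log_j, log_lt_j⟩ := mem_squarefreeBin.1 hj
  obtain ⟨-, lt_log_k, log_lt_k⟩ := mem_squarefreeBin.1 hk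
  have hjk_lt : (j : ℝ) < k + 1 := lt_of_mul_lt_mul_left (lt_log_j.trans log_lt_k) h_nonneg
  have hkj_lt : (k : ℝ) < j + 1 := lt_of_mul_lt_mul_left (lt_log_k.trans log_lt_j) h_nonneg
  norm_cast at hjk_lt hkj_lt
  lia

lemma mem_filter_squarefree_Ioc_exp_iff {x : ℝ} :
    n ∈ {n ∈ Finset.Ioc 0 ⌊Real.exp x⌋₊ | Squarefree n} ↔ Squarefree n ∧ Real.log n ≤ x := by
  rw [Finset.mem_filter, Finset.mem_Ioc, and_comm]
  refine and_congr_right fun hn => ?_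
  have hn_pos : 0 < n := Nat.pos_of_ne_zero hn.ne_zero
  rw [and_iff_right hn_pos, Nat.le_floor_iff (Real.exp_nonneg x),
    Real.log_le_iff_le_exp (mod_cast hn_pos)]

lemma sum_card_squarefreeBin_le (h : ℝ) (K : ℕ) :
    ∑ k ∈ Finset.range K, (squarefreeBin h k).card ≤ squarefreeCount ⌊Real.exp (h * K)⌋₊ := by
  rw [← Finset.card_biUnion (pairwiseDisjoint_squarefreeBin h _)]
  refine Finset.card_le_card (Finset.biUnion_subset.2 fun k hk n hn => ?_)
  have h_nonneg := (pos_of_mem_squarefreeBin hn).le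
  obtain ⟨hn_sqf, -, log_lt⟩ := mem_squarefreeBin.1 hn
  have hkK : (k + 1 : ℝ) ≤ K := mod_cast Finset.mem_range.1 hk
  exact mem_filter_squarefree_Ioc_exp_iff.2
    ⟨hn_sqf, log_lt.le.trans (mul_le_mul_of_nonneg_left hkK h_nonneg)⟩

lemma exists_mem_squarefreeBin_or_exists_log_eq (hh : 0 < h) (hn : Squarefree n)
    (hle : Real.log n ≤ h * K) :
    (∃ k < K, n ∈ squarefreeBin h k) ∨ ∃ k : ℕ, Real.log n = h * k := by
  refine or_iff_not_imp_right.2 fun off_grid => ?_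
  have floor_le := Nat.floor_le (div_nonneg (Real.log_natCast_nonneg n) hh.le)
  have lt_floor := Nat.lt_floor_add_one (Real.log n / h)
  rw [le_div_iff₀' hh] at floor_le
  rw [div_lt_iff₀' hh] at lt_floor
  have lt_log := floor_le.lt_of_ne fun h => off_grid ⟨_, h.symm⟩
  exact ⟨_, Nat.cast_lt.1 (lt_of_mul_lt_mul_left (lt_log.trans_le hle) hh.le),
    mem_squarefreeBin.2 ⟨hn, lt_log, lt_floor⟩⟩

/-- Besides `1`, at most one squarefree number lies on the grid `{e^{hk}}`: two of them would have
a common power. -/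
lemma squarefreeCount_le_sum_card_squarefreeBin_add_two (hh : 0 < h) (K : ℕ) :
    squarefreeCount ⌊Real.exp (h * K)⌋₊ ≤
      ∑ k ∈ Finset.range K, (squarefreeBin h k).card + 2 := by
  classical
  set S := {n ∈ Finset.Ioc 0 ⌊Real.exp (h * K)⌋₊ | Squarefree n}
  set G := (S.erase 1).filter fun n : ℕ => ∃ k : ℕ, Real.log n = h * k
  have card_G : G.card ≤ 1 := by
    refine Finset.card_le_one.2 fun m hm n hn => ?_
    simp only [G, S, Finset.mem_filter, Finset.mem_erase] at hm hn
    obtain ⟨⟨hm_ne, -, hm_sqf⟩, j, hmj⟩ := hm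
    obtain ⟨⟨hn_ne, -, hn_sqf⟩, k, hnk⟩ := hn
    exact eq_of_squarefree_of_log_eq_mul hm_sqf hn_sqf hm_ne hn_ne hmj hnk
  have subset : S ⊆ (Finset.range K).biUnion (squarefreeBin h) ∪ insert 1 G := by
    intro n hn
    obtain ⟨hn_sqf, hle⟩ := mem_filter_squarefree_Ioc_exp_iff.1 hn
    rcases exists_mem_squarefreeBin_or_exists_log_eq hh hn_sqf hle with ⟨k, hkK, hk⟩ | on_grid
    · exact Finset.mem_union_left _ (Finset.mem_biUnion.2 ⟨k, Finset.mem_range.2 hkK, hk⟩)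
    · refine Finset.mem_union_right _ (Finset.mem_insert.2 (or_iff_not_imp_left.2 fun hn_ne => ?_))
      exact Finset.mem_filter.2 ⟨Finset.mem_erase.2 ⟨hn_ne, hn⟩, on_grid⟩
  have card_le := (Finset.card_le_card subset).trans (Finset.card_union_le _ _)
  rw [Finset.card_biUnion (pairwiseDisjoint_squarefreeBin h _)] at card_le
  exact card_le.trans (by linarith [Finset.card_insert_le 1 G])

lemma exp_mul_inv_le_one_of_mem_squarefreeBin (hn : n ∈ squarefreeBin h k) :
    Real.exp (h * k) * (n : ℝ)⁻¹ ≤ 1 := by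
  obtain ⟨hn_sqf, lt_log, -⟩ := mem_squarefreeBin.1 hn
  have hn_pos : (0 : ℝ) < n := mod_cast Nat.pos_of_ne_zero hn_sqf.ne_zero
  rw [← div_eq_mul_inv, div_le_one hn_pos]
  exact ((Real.lt_log_iff_exp_lt hn_pos).1 lt_log).le

lemma exp_neg_le_exp_mul_inv_of_mem_squarefreeBin (hn : n ∈ squarefreeBin h k) :
    Real.exp (-h) ≤ Real.exp (h * k) * (n : ℝ)⁻¹ := by
  obtain ⟨hn_sqf, -, log_lt⟩ := mem_squarefreeBin.1 hn
  have hn_pos : (0 : ℝ) < n := mod_cast Nat.pos_of_ne_zero hn_sqf.ne_zero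
  rw [← Real.exp_log hn_pos, ← Real.exp_neg, ← Real.exp_add, Real.exp_le_exp]
  linarith

lemma sum_exp_mul_sum_squarefreeBin_le (h : ℝ) (K : ℕ) :
    ∑ k ∈ Finset.range K, Real.exp (h * k) * ∑ n ∈ squarefreeBin h k, (n : ℝ)⁻¹ ≤
      squarefreeCount ⌊Real.exp (h * K)⌋₊ := by
  refine le_trans ?_ (Nat.cast_le.2 (sum_card_squarefreeBin_le h K))
  push_cast
  refine Finset.sum_le_sum fun k _ => ?_
  rw [Finset.mul_sum, Finset.cast_card]
  exact Finset.sum_le_sum fun n hn => exp_mul_inv_le_one_of_mem_squarefreeBin hn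

lemma exp_neg_mul_le_sum_exp_mul_sum_squarefreeBin (hh : 0 < h) (K : ℕ) :
    Real.exp (-h) * (squarefreeCount ⌊Real.exp (h * K)⌋₊ - 2) ≤
      ∑ k ∈ Finset.range K, Real.exp (h * k) * ∑ n ∈ squarefreeBin h k, (n : ℝ)⁻¹ := by
  have count_le : (squarefreeCount ⌊Real.exp (h * K)⌋₊ : ℝ) - 2 ≤
      ∑ k ∈ Finset.range K, ((squarefreeBin h k).card : ℝ) := by
    rw [sub_le_iff_le_add]
    exact_mod_cast squarefreeCount_le_sum_card_squarefreeBin_add_two hh K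
  refine (mul_le_mul_of_nonneg_left count_le (Real.exp_nonneg _)).trans ?_
  rw [Finset.mul_sum]
  refine Finset.sum_le_sum fun k _ => ?_
  rw [Finset.mul_sum, mul_comm, ← nsmul_eq_mul]
  exact Finset.card_nsmul_le_sum _ _ _ fun n hn => exp_neg_le_exp_mul_inv_of_mem_squarefreeBin hn

end SquarefreeBins

section MeshLimits

variable {ι : Type*} {l : Filter ι} {h : ι → ℝ} {K : ι → ℕ}

theorem tendsto_exp_neg_mul_sum_squarefreeBin (hh : Tendsto h l (𝓝[>] 0))
    (hhK : Tendsto (fun i => h i * K i) l atTop) :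
    Tendsto (fun i => Real.exp (-(h i * K i)) * ∑ k ∈ Finset.range (K i),
        Real.exp (h i * k) * ∑ n ∈ squarefreeBin (h i) k, (n : ℝ)⁻¹)
      l (𝓝 (Real.pi ^ 2 / 6)⁻¹) := by
  have tendsto_exp := Real.tendsto_exp_atTop.comp hhK
  have density := tendsto_squarefreeCount_floor_div.comp tendsto_exp
  have lower := ((Real.continuous_exp.tendsto 0).comp
    (neg_zero (G := ℝ) ▸ (tendsto_nhdsWithin_iff.1 hh).1.neg)).mul
      (density.sub ((tendsto_inv_atTop_zero.comp tendsto_exp).const_mul 2))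
  rw [Real.exp_zero, mul_zero, sub_zero, one_mul] at lower
  refine tendsto_of_tendsto_of_tendsto_of_le_of_le' lower density ?_ (.of_forall fun i => ?_)
  · filter_upwards [(tendsto_nhdsWithin_iff.1 hh).2] with i (hi : 0 < h i)
    simp only [Function.comp_apply, Real.exp_neg (h i * K i), ← div_eq_mul_inv, ← div_eq_inv_mul]
    rw [← sub_div, ← mul_div_assoc]
    gcongr
    exact exp_neg_mul_le_sum_exp_mul_sum_squarefreeBin hi (K i)
  · rw [Real.exp_neg, ← div_eq_inv_mul]
    exact div_le_div_of_nonneg_right (sum_exp_mul_sum_squarefreeBin_le _ _) (Real.exp_nonneg _)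

lemma tendsto_div_exp_sub_one : Tendsto (fun t : ℝ => t / (Real.exp t - 1)) (𝓝[≠] 0) (𝓝 1) := by
  have slope := ((Real.hasDerivAt_exp 0).tendsto_slope).inv₀ (Real.exp_ne_zero 0)
  rw [Real.exp_zero, inv_one] at slope
  refine slope.congr fun t => ?_
  rw [slope_def_field, inv_div, Real.exp_zero, sub_zero]

lemma mul_exp_neg_mul_sum_exp {h : ℝ} (hh : h ≠ 0) (K : ℕ) :
    h * (Real.exp (-(h * K)) * ∑ k ∈ Finset.range K, Real.exp (h * k)) =
      (1 - Real.exp (-(h * K))) * (h / (Real.exp h - 1)) := by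
  have exp_mul (k : ℕ) : Real.exp (h * k) = Real.exp h ^ k := by rw [mul_comm, Real.exp_nat_mul]
  have exp_ne_one : Real.exp h ≠ 1 := mt (Real.exp_eq_one_iff h).1 hh
  rw [Real.exp_neg]
  simp only [exp_mul]
  rw [geom_sum_eq exp_ne_one]
  field_simp

lemma tendsto_mul_exp_neg_mul_sum_exp (hh : Tendsto h l (𝓝[>] 0))
    (hhK : Tendsto (fun i => h i * K i) l atTop) :
    Tendsto (fun i => h i *
      (Real.exp (-(h i * K i)) * ∑ k ∈ Finset.range (K i), Real.exp (h i * k))) l (𝓝 1) := by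
  have tendsto_ne := hh.mono_right (nhdsWithin_mono 0 fun t (ht : 0 < t) => ht.ne')
  have geom := ((Real.tendsto_exp_neg_atTop_nhds_zero.comp hhK).const_sub 1).mul
    (tendsto_div_exp_sub_one.comp tendsto_ne)
  rw [sub_zero, one_mul] at geom
  refine geom.congr' ?_
  filter_upwards [(tendsto_nhdsWithin_iff.1 hh).2] with i (hi : 0 < h i)
  exact (mul_exp_neg_mul_sum_exp hi.ne' (K i)).symm

end MeshLimits

section NthPrime

lemma prime_nthPrime (j : ℕ) : (nthPrime j).Prime := Nat.prime_nth_prime j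

lemma log_nthPrime_pos (j : ℕ) : 0 < Real.log (nthPrime j) :=
  Real.log_pos (mod_cast (prime_nthPrime j).one_lt)

lemma strictMono_nthPrime : StrictMono nthPrime := Nat.nth_strictMono Nat.infinite_setOfPred_prime

lemma tendsto_nthPrime_sub_one_atTop :
    Tendsto (fun m : ℕ => (nthPrime (m - 1) : ℝ)) atTop atTop :=
  tendsto_natCast_atTop_atTop.comp
    (strictMono_nthPrime.tendsto_atTop.comp (tendsto_sub_atTop_nat 1))

lemma primesLE_nthPrime (m : ℕ) :
    Nat.primesLE (nthPrime m) = (Finset.range (m + 1)).image nthPrime := by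
  ext p
  simp only [Nat.mem_primesLE, Finset.mem_image, Finset.mem_range, Nat.lt_succ_iff]
  constructor
  · rintro ⟨hle, hp⟩
    have nthPrime_count : nthPrime (Nat.count Nat.Prime p) = p := Nat.nth_count hp
    exact ⟨_, strictMono_nthPrime.le_iff_le.1 (nthPrime_count.trans_le hle), nthPrime_count⟩
  · rintro ⟨j, hj, rfl⟩
    exact ⟨strictMono_nthPrime.monotone hj, prime_nthPrime j⟩

lemma Zm_pos (m : ℕ) : 0 < Zm m := Finset.prod_pos fun j _ => by positivity

lemma log_Zm_succ (m : ℕ) :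
    Real.log (Zm (m + 1)) = ∑ p ∈ Nat.primesLE (nthPrime m), Real.log (1 + (p : ℝ)⁻¹) := by
  rw [Zm, Real.log_prod fun j _ => by positivity, primesLE_nthPrime,
    Finset.sum_image strictMono_nthPrime.injective.injOn]
  simp only [one_div]

theorem tendsto_log_nthPrime_div_Zm :
    Tendsto (fun m : ℕ => Real.log (nthPrime (m - 1)) / Zm m) atTop
      (𝓝 (Real.exp (-Real.eulerMascheroniConstant) * (Real.pi ^ 2 / 6))) := by
  have mertens := (tendsto_sum_primesLE_log_one_add_inv_sub_log_log.comp
    tendsto_nthPrime_sub_one_atTop).neg.rexp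
  rw [neg_sub, sub_eq_neg_add, Real.exp_add, Real.exp_log (by positivity)] at mertens
  refine mertens.congr' ?_
  filter_upwards [eventually_ge_atTop 1] with m hm
  obtain ⟨m, rfl⟩ := Nat.exists_eq_add_of_le' hm
  rw [Function.comp_apply, Nat.floor_natCast, Nat.add_sub_cancel, ← log_Zm_succ, neg_sub,
    Real.exp_sub, Real.exp_log (log_nthPrime_pos m), Real.exp_log (Zm_pos _)]

end NthPrime

section Configurations

variable {m n : ℕ}

lemma dvd_elt_iff {p : ℕ} (hp : p.Prime) (ν : Fin m → Bool) :
    p ∣ elt m ν ↔ ∃ j, ν j ∧ nthPrime j = p := by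
  rw [elt, hp.prime.dvd_finsetProd_iff]
  constructor
  · rintro ⟨j, -, hj⟩
    split_ifs at hj with hν
    · exact ⟨j, hν, ((Nat.prime_dvd_prime_iff_eq hp (prime_nthPrime j)).1 hj).symm⟩
    · exact absurd hj hp.not_dvd_one
  · rintro ⟨j, hν, rfl⟩
    exact ⟨j, Finset.mem_univ j, by rw [if_pos hν]⟩

lemma nthPrime_dvd_elt_iff (ν : Fin m → Bool) (j : Fin m) : nthPrime j ∣ elt m ν ↔ ν j := by
  rw [dvd_elt_iff (prime_nthPrime j)]
  refine ⟨?_, fun hν => ⟨j, hν, rfl⟩⟩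
  rintro ⟨i, hν, hij⟩
  rwa [← Fin.ext (strictMono_nthPrime.injective hij)]

lemma elt_injective (m : ℕ) : Function.Injective (elt m) := fun ν ν' h => by
  ext j
  rw [Bool.eq_iff_iff, ← nthPrime_dvd_elt_iff, ← nthPrime_dvd_elt_iff, h]

lemma squarefree_elt (ν : Fin m → Bool) : Squarefree (elt m ν) := by
  refine Finset.squarefree_prod_of_pairwise_isCoprime (fun i _ j _ hij => ?_) fun j _ => ?_
  · rw [Function.onFun, ← Nat.coprime_iff_isRelPrime]
    split_ifs
    · exact (Nat.coprime_primes (prime_nthPrime i) (prime_nthPrime j)).2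
        fun h => hij (Fin.ext (strictMono_nthPrime.injective h))
    all_goals simp
  · split_ifs
    exacts [(prime_nthPrime j).prime.squarefree, squarefree_one]

lemma exists_elt_eq_of_squarefree (hm : 1 ≤ m) (hn : Squarefree n)
    (hle : n ≤ nthPrime (m - 1)) : ∃ ν, elt m ν = n := by
  refine ⟨fun j => decide (nthPrime j ∣ n), ?_⟩
  rw [Nat.Squarefree.ext_iff (squarefree_elt _) hn]
  intro p hp
  rw [dvd_elt_iff hp]
  constructor
  · rintro ⟨j, hj, rfl⟩
    exact of_decide_eq_true hj
  · intro hpn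
    have mem_primesLE : p ∈ Nat.primesLE (nthPrime (m - 1)) := Nat.mem_primesLE.2
      ⟨(Nat.le_of_dvd (Nat.pos_of_ne_zero hn.ne_zero) hpn).trans hle, hp⟩
    rw [primesLE_nthPrime, Nat.sub_add_cancel hm, Finset.mem_image] at mem_primesLE
    obtain ⟨j, hj, rfl⟩ := mem_primesLE
    exact ⟨⟨j, Finset.mem_range.1 hj⟩, decide_eq_true hpn, rfl⟩

end Configurations

section ErrorTerms

/-- The length `σ ln p_m / K` of the `K` consecutive intervals for `ln n` whose probabilities enter
the error terms. -/
def logMesh (m : ℕ) (σ : ℝ) (K : ℕ) : ℝ := σ * Real.log (nthPrime (m - 1)) / K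

variable {m K k : ℕ} {σ : ℝ}

lemma logMesh_mul_cast (hK : K ≠ 0) :
    logMesh m σ K * K = σ * Real.log (nthPrime (m - 1)) :=
  div_mul_cancel₀ _ (Nat.cast_ne_zero.2 hK)

lemma log_div_log_between_iff (n : ℕ) :
    (σ * k / K < Real.log n / Real.log (nthPrime (m - 1)) ∧
      Real.log n / Real.log (nthPrime (m - 1)) < σ * (k + 1) / K) ↔
    logMesh m σ K * k < Real.log n ∧ Real.log n < logMesh m σ K * (k + 1) := by
  have log_pos := log_nthPrime_pos (m - 1)
  rw [lt_div_iff₀ log_pos, div_lt_iff₀ log_pos, logMesh]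
  ring_nf

lemma le_nthPrime_of_mem_squarefreeBin_logMesh {n : ℕ} (hσ : σ ≤ 1) (hk : k < K)
    (hn : n ∈ squarefreeBin (logMesh m σ K) k) : n ≤ nthPrime (m - 1) := by
  have mesh_pos := pos_of_mem_squarefreeBin hn
  obtain ⟨hn_sqf, -, log_lt⟩ := mem_squarefreeBin.1 hn
  have hn_pos : (0 : ℝ) < n := mod_cast Nat.pos_of_ne_zero hn_sqf.ne_zero
  have hp_pos : (0 : ℝ) < nthPrime (m - 1) := mod_cast (prime_nthPrime (m - 1)).pos
  have hkK : (k + 1 : ℝ) ≤ K := mod_cast hk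
  have log_le : Real.log n ≤ Real.log (nthPrime (m - 1)) :=
    calc Real.log n ≤ logMesh m σ K * (k + 1) := log_lt.le
      _ ≤ logMesh m σ K * K := by gcongr
      _ = σ * Real.log (nthPrime (m - 1)) := logMesh_mul_cast (by lia)
      _ ≤ Real.log (nthPrime (m - 1)) :=
          mul_le_of_le_one_left (log_nthPrime_pos (m - 1)).le hσ
  exact_mod_cast (Real.log_le_log_iff hn_pos hp_pos).1 log_le

lemma Err_eq_sum_squarefreeBin (hm : 1 ≤ m) (hσ : σ ≤ 1) (hk : k < K) :
    Err m σ K k = (Zm m)⁻¹ * ∑ n ∈ squarefreeBin (logMesh m σ K) k, (n : ℝ)⁻¹ -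
      Real.exp (-Real.eulerMascheroniConstant) * σ / K := by
  classical
  rw [Err, Finset.mul_sum]
  congr 1
  refine Finset.sum_bij (fun ν _ => elt m ν) (fun ν hν => ?_) (fun ν _ ν' _ h => elt_injective m h)
    (fun n hn => ?_) (fun ν _ => by rw [mass, one_div, mul_inv])
  · exact mem_squarefreeBin.2
      ⟨squarefree_elt ν, (log_div_log_between_iff _).1 (Finset.mem_filter.1 hν).2⟩
  · obtain ⟨ν, rfl⟩ := exists_elt_eq_of_squarefree hm (mem_squarefreeBin.1 hn).1
      (le_nthPrime_of_mem_squarefreeBin_logMesh hσ hk hn)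
    have log_mem := (log_div_log_between_iff _).2 (mem_squarefreeBin.1 hn).2
    exact ⟨ν, Finset.mem_filter.2 ⟨Finset.mem_univ ν, log_mem⟩, rfl⟩

lemma inv_nthPrime_rpow_eq (hK : K ≠ 0) (k : ℕ) :
    ((nthPrime (m - 1) : ℝ) ^ (σ - σ * k / K))⁻¹ =
      Real.exp (-(logMesh m σ K * K)) * Real.exp (logMesh m σ K * k) := by
  have hp_pos : (0 : ℝ) < nthPrime (m - 1) := mod_cast (prime_nthPrime (m - 1)).pos
  rw [← Real.rpow_neg hp_pos.le, Real.rpow_def_of_pos hp_pos, ← Real.exp_add, logMesh_mul_cast hK,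
    logMesh]
  ring_nf

lemma sum_Err_div_rpow_mul_log (hm : 1 ≤ m) (hσ : σ ≤ 1) (hK : K ≠ 0) :
    (∑ k ∈ Finset.range K, Err m σ K k / (nthPrime (m - 1) : ℝ) ^ (σ - σ * k / K)) *
        Real.log (nthPrime (m - 1)) =
      Real.log (nthPrime (m - 1)) / Zm m *
        (Real.exp (-(logMesh m σ K * K)) * ∑ k ∈ Finset.range K, Real.exp (logMesh m σ K * k) *
          ∑ n ∈ squarefreeBin (logMesh m σ K) k, (n : ℝ)⁻¹) -
      Real.exp (-Real.eulerMascheroniConstant) * (logMesh m σ K *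
        (Real.exp (-(logMesh m σ K * K)) *
          ∑ k ∈ Finset.range K, Real.exp (logMesh m σ K * k))) := by
  simp only [Finset.mul_sum (Finset.range K), Finset.sum_mul (Finset.range K),
    ← Finset.sum_sub_distrib]
  refine Finset.sum_congr rfl fun k hk => ?_
  rw [Err_eq_sum_squarefreeBin hm hσ (Finset.mem_range.1 hk), div_eq_mul_inv (_ - _),
    inv_nthPrime_rpow_eq hK]
  generalize Real.exp (-(logMesh m σ K * K)) = a, Real.exp (logMesh m σ K * k) = b
  rw [logMesh]
  ring

end ErrorTerms

section WeightedErrorSum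

variable {K : ℕ → ℕ} {σ : ℝ}

lemma tendsto_log_nthPrime_atTop :
    Tendsto (fun m : ℕ => Real.log (nthPrime (m - 1))) atTop atTop :=
  Real.tendsto_log_atTop.comp tendsto_nthPrime_sub_one_atTop

lemma tendsto_logMesh (hK : ∀ m, 1 ≤ K m)
    (hmesh : Tendsto (fun m : ℕ => Real.log (nthPrime (m - 1)) / K m) atTop (𝓝 0)) (hσ : 0 < σ) :
    Tendsto (fun m => logMesh m σ (K m)) atTop (𝓝[>] 0) := by
  refine tendsto_nhdsWithin_iff.2 ⟨?_, .of_forall fun m => ?_⟩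
  · simpa only [logMesh, mul_div_assoc, mul_zero] using hmesh.const_mul σ
  · exact div_pos (mul_pos hσ (log_nthPrime_pos _)) (mod_cast hK m)

lemma tendsto_log_div_of_tendsto_log_pow_three_div_sq {c : ℝ}
    (hlim : Tendsto (fun m : ℕ => Real.log (nthPrime (m - 1)) ^ 3 / (K m : ℝ) ^ 2) atTop (𝓝 c)) :
    Tendsto (fun m : ℕ => Real.log (nthPrime (m - 1)) / K m) atTop (𝓝 0) := by
  have h := (hlim.div_atTop tendsto_log_nthPrime_atTop).sqrt
  rw [Real.sqrt_zero] at h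
  refine h.congr fun m => ?_
  have log_pos := log_nthPrime_pos (m - 1)
  rw [← Real.sqrt_sq (div_nonneg log_pos.le (K m).cast_nonneg)]
  congr 1
  field_simp

theorem weighted_error_sum_asymptotics_general (K : ℕ → ℕ) (hK : ∀ m, 1 ≤ K m)
    (hmesh : Tendsto (fun m : ℕ => Real.log (nthPrime (m - 1)) / K m) atTop (𝓝 0))
    (σ : ℝ) (hσ0 : 0 < σ) (hσ1 : σ ≤ 1) :
    (fun m : ℕ => ∑ k ∈ Finset.range (K m),
        Err m σ (K m) k / (nthPrime (m - 1) : ℝ) ^ (σ - σ * k / (K m : ℝ))) =o[atTop]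
      fun m : ℕ => 1 / Real.log (nthPrime (m - 1)) := by
  rw [isLittleO_iff_tendsto fun m h => absurd h (one_div_pos.2 (log_nthPrime_pos (m - 1))).ne']
  have hK_ne (m : ℕ) : K m ≠ 0 := Nat.one_le_iff_ne_zero.1 (hK m)
  have mesh := tendsto_logMesh hK hmesh hσ0
  have range : Tendsto (fun m => logMesh m σ (K m) * K m) atTop atTop := by
    simpa only [logMesh_mul_cast (hK_ne _)] using tendsto_log_nthPrime_atTop.const_mul_atTop hσ0
  have h := (tendsto_log_nthPrime_div_Zm.mul (tendsto_exp_neg_mul_sum_squarefreeBin mesh range)).sub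
    ((tendsto_mul_exp_neg_mul_sum_exp mesh range).const_mul
      (Real.exp (-Real.eulerMascheroniConstant)))
  rw [mul_inv_cancel_right₀ (by positivity), mul_one, sub_self] at h
  refine h.congr' ?_
  filter_upwards [eventually_ge_atTop 1] with m hm
  rw [← sum_Err_div_rpow_mul_log hm hσ1 (hK_ne m), div_div_eq_mul_div, div_one]

end WeightedErrorSum

/-- Corollary 1 of the paper: the weighted sum of error terms, with weights
`p_m^{-(σ-δ_k)}`, is `O(1/ln p_m)` if `c > 0` and `o(1/ln p_m)` if `c = 0`. -/
theorem weighted_error_sum_asymptotics (K : ℕ → ℕ) (hK : ∀ m, 1 ≤ K m) (c : ℝ) (hc : 0 ≤ c)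
    (hlim : Tendsto (fun m : ℕ => (Real.log (nthPrime (m - 1))) ^ 3 / (K m : ℝ) ^ 2)
      atTop (𝓝 c))
    (σ : ℝ) (hσ0 : 0 < σ) (hσ1 : σ ≤ 1) :
    (0 < c → (fun m : ℕ => ∑ k ∈ Finset.range (K m),
        Err m σ (K m) k / (nthPrime (m - 1) : ℝ) ^ (σ - σ * k / (K m : ℝ))) =O[atTop]
      fun m : ℕ => 1 / Real.log (nthPrime (m - 1))) ∧
    (c = 0 → (fun m : ℕ => ∑ k ∈ Finset.range (K m),
        Err m σ (K m) k / (nthPrime (m - 1) : ℝ) ^ (σ - σ * k / (K m : ℝ))) =o[atTop]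
      fun m : ℕ => 1 / Real.log (nthPrime (m - 1))) := by
  have h := weighted_error_sum_asymptotics_general K hK
    (tendsto_log_div_of_tendsto_log_pow_three_div_sq hlim) σ hσ0 hσ1
  exact ⟨fun _ => h.isBigO, fun _ => h⟩

end
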